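/- arXiv:1905.05630 — 2 statements merged into one kernel-verified Lean document; each statement's English description precedes it below -/
import Mathlib

section
/- Let X ∈ 𝒞 and let K ⊆ G be a finite subset. Then the tail X̂ := X − Σ_{g∈K} L_g X_g satisfies ‖X̂‖_π = ‖π(X*X) − Σ_{g∈K} X_g* X_g‖^{1/2} = inf{ ‖X − Y‖_π : Y ∈ span{ L_k Ψ(A) : k ∈ K, A ∈ 𝒜 } }. (Nearest point / best approximation formula.) -/
set_option synthInstance.maxHeartbeats 1000000
set_option maxHeartbeats 1000000

open scoped InnerProductSpace
open ContinuousLinearMap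

noncomputable section

/-- `l2 G H` is the Hilbert space `ℓ²(G,H)` of square-summable `H`-valued functions on `G`. -/
abbrev l2 (G : Type) (H : Type) [NormedAddCommGroup H] : Type := lp (fun _ : G => H) 2

/-! For a conditional expectation `E`, the map `(x, y) ↦ E (x* y)` is an operator-valued inner
product, and the unitaries `L_g` are orthonormal for it because `π (L_g) = 0` for `g ≠ 1`. Since `π`
is right linear over its range, the tail `X̂` is orthogonal to the whole right module spanned by the
`L_k` with `k ∈ K`. Hence, for `Y` in the span of the `L_k Ψ(A)` and `W = (X - Y) - X̂`, Pythagoras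
gives `π ((X - Y)* (X - Y)) = π (X̂* X̂) + π (W* W) ≥ π (X̂* X̂)`.

The partial sum is itself such a `Y`, because each coefficient `X_k` lies in `Ψ(𝒜)`: this holds on
the dense span of the `L_g Ψ(A)`, and passes to the limit since `π` is continuous and `Ψ(𝒜)`, an
isometric image of `𝒜`, is closed.
-/

section Expectation

variable {B : Type*} [CStarAlgebra B] [PartialOrder B] (E : B →ₚ[ℂ] B)

/-- The averaging identity for a positive map, i.e. right linearity over its range. A unital
positive map satisfying it is a conditional expectation onto its range. -/
def IsAveraging : Prop :=
  ∀ x y, E (x * E y) = E x * E y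

/-- The seminorm `‖x‖_E = ‖E (x* x)‖^{1/2}` attached to a positive map `E`. -/
def expectationNorm (x : B) : ℝ :=
  √‖E (star x * x)‖

variable {ι : Type*}

/-- Orthonormality of the family `u` for the `B`-valued inner product `E (x* y)`. -/
structure IsExpectationOrthonormal (u : ι → B) : Prop where
  map_star_mul_self (i : ι) : E (star (u i) * u i) = 1
  map_star_mul_of_ne {i j : ι} (hij : i ≠ j) : E (star (u i) * u j) = 0

/-- The `i`-th Fourier coefficient `E (uᵢ* x)` of `x` along the family `u`. -/
def expectationCoeff (u : ι → B) (i : ι) (x : B) : B :=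
  E (star (u i) * x)

/-- The partial Fourier sum of `x` over the finite set `K`. -/
def expectationPartialSum (u : ι → B) (K : Finset ι) (x : B) : B :=
  ∑ i ∈ K, u i * expectationCoeff E u i x

/-- The right module over the range of `E` spanned by the `u i` with `i ∈ K`. -/
def expectationSpan (u : ι → B) (K : Finset ι) : Submodule ℂ B :=
  Submodule.span ℂ {y | ∃ i ∈ K, ∃ c, y = u i * E c}

variable {E} {u : ι → B} {K : Finset ι} {x y : B}

theorem expectationPartialSum_mem_expectationSpan (E : B →ₚ[ℂ] B) (u : ι → B) (K : Finset ι)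
    (x : B) : expectationPartialSum E u K x ∈ expectationSpan E u K :=
  Submodule.sum_mem _ fun i hi => Submodule.subset_span ⟨i, hi, _, rfl⟩

theorem IsAveraging.expectationCoeff_partialSum (hE : IsAveraging E)
    (hu : IsExpectationOrthonormal E u) (x : B) {i : ι} (hi : i ∈ K) :
    expectationCoeff E u i (expectationPartialSum E u K x) = expectationCoeff E u i x := by
  rw [expectationCoeff, expectationPartialSum, Finset.mul_sum, map_sum,
    Finset.sum_eq_single_of_mem i hi]
  · rw [← mul_assoc, expectationCoeff, hE, hu.map_star_mul_self, one_mul]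
  · intro j _ hji
    rw [← mul_assoc, expectationCoeff, hE, hu.map_star_mul_of_ne hji.symm, zero_mul]

variable [StarOrderedRing B]

theorem expectation_star_mul_comm_eq_zero (h : E (star x * y) = 0) : E (star y * x) = 0 := by
  simpa only [← map_star, star_mul, star_star, star_zero] using congrArg star h

theorem expectation_pythagoras (h : E (star x * y) = 0) :
    E (star (x + y) * (x + y)) = E (star x * x) + E (star y * y) := by
  simp only [star_add, add_mul, mul_add, map_add, h, expectation_star_mul_comm_eq_zero h,
    add_zero, zero_add]

theorem expectationNorm_le_expectationNorm_add (h : E (star x * y) = 0) :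
    expectationNorm E x ≤ expectationNorm E (x + y) := by
  refine Real.sqrt_le_sqrt (CStarAlgebra.norm_le_norm_of_nonneg_of_le
    (E.map_nonneg (star_mul_self_nonneg x)) ?_)
  rw [expectation_pythagoras h]
  exact le_add_of_nonneg_right (E.map_nonneg (star_mul_self_nonneg y))

namespace IsAveraging

theorem expectation_star_mul_eq_zero_of_mem_span (hE : IsAveraging E)
    (hx : ∀ i ∈ K, expectationCoeff E u i x = 0) (hy : y ∈ expectationSpan E u K) :
    E (star x * y) = 0 := by
  induction hy using Submodule.span_induction with
  | mem y hy =>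
    obtain ⟨i, hi, c, rfl⟩ := hy
    rw [← mul_assoc, hE, expectation_star_mul_comm_eq_zero (hx i hi), zero_mul]
  | zero => rw [mul_zero, map_zero]
  | add y z _ _ hy hz => rw [mul_add, map_add, hy, hz, add_zero]
  | smul a y _ hy => rw [mul_smul_comm, map_smul, hy, smul_zero]

theorem expectation_star_tail_mul_eq_zero (hE : IsAveraging E)
    (hu : IsExpectationOrthonormal E u) (x : B) (hy : y ∈ expectationSpan E u K) :
    E (star (x - expectationPartialSum E u K x) * y) = 0 := by
  refine hE.expectation_star_mul_eq_zero_of_mem_span (fun i hi => ?_) hy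
  rw [expectationCoeff, mul_sub, map_sub, sub_eq_zero]
  exact (hE.expectationCoeff_partialSum hu x hi).symm

theorem expectation_star_mul_self_partialSum (hE : IsAveraging E)
    (hu : IsExpectationOrthonormal E u) (K : Finset ι) (x : B) :
    E (star (expectationPartialSum E u K x) * expectationPartialSum E u K x)
      = ∑ i ∈ K, star (expectationCoeff E u i x) * expectationCoeff E u i x := by
  set s := expectationPartialSum E u K x with hs
  have hterm {i : ι} (hi : i ∈ K) : E (star s * (u i * expectationCoeff E u i x))
      = star (expectationCoeff E u i x) * expectationCoeff E u i x := by
    rw [← hE.expectationCoeff_partialSum hu x hi, ← hs, ← mul_assoc, expectationCoeff, hE,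
      ← map_star, star_mul, star_star]
  calc E (star s * s) = ∑ i ∈ K, E (star s * (u i * expectationCoeff E u i x)) := by
        rw [← map_sum, ← Finset.mul_sum, ← expectationPartialSum]
    _ = _ := Finset.sum_congr rfl fun i hi => hterm hi

theorem expectation_star_mul_self_tail (hE : IsAveraging E)
    (hu : IsExpectationOrthonormal E u) (K : Finset ι) (x : B) :
    E (star (x - expectationPartialSum E u K x) * (x - expectationPartialSum E u K x))
      = E (star x * x)
        - ∑ i ∈ K, star (expectationCoeff E u i x) * expectationCoeff E u i x := by
  rw [← hE.expectation_star_mul_self_partialSum hu, eq_sub_iff_add_eq,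
    ← expectation_pythagoras (hE.expectation_star_tail_mul_eq_zero hu x
      (expectationPartialSum_mem_expectationSpan E u K x)), sub_add_cancel]

theorem isLeast_expectationNorm_tail (hE : IsAveraging E)
    (hu : IsExpectationOrthonormal E u) {M : Submodule ℂ B} (hM : M ≤ expectationSpan E u K)
    (hx : expectationPartialSum E u K x ∈ M) :
    IsLeast ((fun y => expectationNorm E (x - y)) '' M)
      (expectationNorm E (x - expectationPartialSum E u K x)) := by
  refine ⟨⟨_, hx, rfl⟩, ?_⟩
  rintro _ ⟨y, hy, rfl⟩
  have horth := hE.expectation_star_tail_mul_eq_zero hu x (hM (M.sub_mem hx hy))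
  simpa only [sub_add_sub_cancel] using expectationNorm_le_expectationNorm_add horth

end IsAveraging

end Expectation

section CovariantPair

variable {B A G : Type*} [CStarAlgebra B] [Ring A] [StarRing A] [Algebra ℂ A] [Group G]
  {Ψ : A →⋆ₐ[ℂ] B} {u : G →* B} {α : G → A → A}

theorem map_mul_apply_of_covariant (hcov : ∀ g a, u g * Ψ a * u g⁻¹ = Ψ (α g a)) (g : G) (a : A) :
    Ψ a * u g = u g * Ψ (α g⁻¹ a) := by
  rw [← hcov, inv_inv, ← mul_assoc, ← mul_assoc, ← map_mul u, mul_inv_cancel, map_one, one_mul]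

theorem mem_span_mul_of_mem_adjoin (hu : ∀ g, star (u g) = u g⁻¹)
    (hcov : ∀ g a, u g * Ψ a * u g⁻¹ = Ψ (α g a)) {x : B}
    (hx : x ∈ StarAlgebra.adjoin ℂ (Set.range Ψ ∪ Set.range u)) :
    x ∈ Submodule.span ℂ {y : B | ∃ g a, y = u g * Ψ a} := by
  induction hx using StarAlgebra.adjoin_induction with
  | mem x hx =>
    refine Submodule.subset_span ?_
    rcases hx with ⟨a, rfl⟩ | ⟨g, rfl⟩
    · exact ⟨1, a, by rw [map_one, one_mul]⟩
    · exact ⟨g, 1, by rw [map_one, mul_one]⟩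
  | algebraMap r =>
    refine Submodule.subset_span ⟨1, algebraMap ℂ A r, ?_⟩
    rw [map_one, one_mul, AlgHomClass.commutes]
  | add x y _ _ hx hy => exact Submodule.add_mem _ hx hy
  | mul x y _ _ hx hy =>
    have hxy := Submodule.mul_mem_mul hx hy
    rw [Submodule.span_mul_span] at hxy
    refine Submodule.span_mono ?_ hxy
    rintro _ ⟨_, ⟨g, a, rfl⟩, _, ⟨h, b, rfl⟩, rfl⟩
    refine ⟨g * h, α h⁻¹ a * b, ?_⟩
    calc u g * Ψ a * (u h * Ψ b) = u g * (Ψ a * u h) * Ψ b := by simp only [mul_assoc]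
      _ = u g * (u h * Ψ (α h⁻¹ a)) * Ψ b := by rw [map_mul_apply_of_covariant hcov]
      _ = u (g * h) * Ψ (α h⁻¹ a * b) := by
        simp only [map_mul, mul_assoc]
  | star x _ hx =>
    refine Submodule.span_induction (p := fun x _ => star x ∈ _) ?_ ?_ ?_ ?_ hx
    · rintro _ ⟨g, a, rfl⟩
      refine Submodule.subset_span ⟨g⁻¹, α g⁻¹⁻¹ (star a), ?_⟩
      rw [star_mul, hu, ← map_star, map_mul_apply_of_covariant hcov]
    · rw [star_zero]; exact Submodule.zero_mem _
    · intro x y _ _ hx hy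
      rw [star_add]; exact Submodule.add_mem _ hx hy
    · intro c x _ hx
      rw [star_smul]; exact Submodule.smul_mem _ _ hx

variable [PartialOrder B] {E : B →ₚ[ℂ] B}

theorem isExpectationOrthonormal_of_star_eq_inv (hu : ∀ g, star (u g) = u g⁻¹) (hE1 : E 1 = 1)
    (hEu : ∀ g, g ≠ 1 → E (u g) = 0) : IsExpectationOrthonormal E u where
  map_star_mul_self g := by rw [hu, ← map_mul, inv_mul_cancel, map_one, hE1]
  map_star_mul_of_ne hgh := by
    rw [hu, ← map_mul]
    exact hEu _ fun h1 => hgh (inv_mul_eq_one.mp h1)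

variable [StarOrderedRing B]

theorem IsAveraging.expectationCoeff_mem_range
    (hE : IsAveraging E) (huE : IsExpectationOrthonormal E u)
    (hEΨ : ∀ a, E (Ψ a) = Ψ a) (hΨ : IsClosed (Set.range Ψ))
    (hu : ∀ g, star (u g) = u g⁻¹)
    (hcov : ∀ g a, u g * Ψ a * u g⁻¹ = Ψ (α g a)) {x : B}
    (hx : x ∈ (StarAlgebra.adjoin ℂ
      (Set.range Ψ ∪ Set.range u)).topologicalClosure) (k : G) :
    expectationCoeff E u k x ∈ Set.range Ψ := by
  have hspan : ∀ y ∈ Submodule.span ℂ {y : B | ∃ g a, y = u g * Ψ a},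
      expectationCoeff E u k y ∈ Set.range Ψ := by
    intro y hy
    induction hy using Submodule.span_induction with
    | mem y hy =>
      obtain ⟨g, a, rfl⟩ := hy
      rw [expectationCoeff, ← mul_assoc, ← hEΨ, hE, hEΨ]
      obtain rfl | hkg := eq_or_ne k g
      · exact ⟨a, by rw [huE.map_star_mul_self, one_mul]⟩
      · exact ⟨0, by rw [huE.map_star_mul_of_ne hkg, zero_mul, map_zero]⟩
    | zero => exact ⟨0, by rw [expectationCoeff, mul_zero, map_zero, map_zero]⟩
    | add y z _ _ hy hz =>
      rw [expectationCoeff, mul_add, map_add]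
      exact Ψ.range.add_mem hy hz
    | smul c y _ hy =>
      rw [expectationCoeff, mul_smul_comm, map_smul]
      exact Ψ.range.smul_mem hy c
  have hcont : Continuous (expectationCoeff E u k) :=
    (map_continuous E).comp (continuous_const_mul _)
  rw [← hΨ.closure_eq]
  exact map_mem_closure hcont hx fun y hy => hspan y (mem_span_mul_of_mem_adjoin hu hcov hy)

end CovariantPair

theorem hadamard_stmt4_general {B A G : Type*} [CStarAlgebra B] [PartialOrder B]
    [StarOrderedRing B] [Ring A] [StarRing A] [Algebra ℂ A] [Group G]
    {Ψ : A →⋆ₐ[ℂ] B} (hΨ : IsClosed (Set.range Ψ)) {u : G →* B} {α : G → A → A}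
    (hu : ∀ g, star (u g) = u g⁻¹)
    (hcov : ∀ g a, u g * Ψ a * u g⁻¹ = Ψ (α g a))
    {E : B →ₚ[ℂ] B} (hE : IsAveraging E) (hEΨ : ∀ a, E (Ψ a) = Ψ a)
    (hEu : ∀ g, g ≠ 1 → E (u g) = 0) {x : B}
    (hx : x ∈ (StarAlgebra.adjoin ℂ
      (Set.range Ψ ∪ Set.range u)).topologicalClosure) (K : Finset G) :
    expectationNorm E (x - expectationPartialSum E u K x)
        = √‖E (star x * x) - ∑ g ∈ K, star (expectationCoeff E u g x)
            * expectationCoeff E u g x‖ ∧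
      IsLeast ((fun y => expectationNorm E (x - y)) ''
          (Submodule.span ℂ {y : B | ∃ g ∈ K, ∃ a, y = u g * Ψ a} : Set B))
        √‖E (star x * x) - ∑ g ∈ K, star (expectationCoeff E u g x)
            * expectationCoeff E u g x‖ := by
  have hE1 : E 1 = 1 := by simpa only [map_one] using hEΨ 1
  have huE := isExpectationOrthonormal_of_star_eq_inv hu hE1 hEu
  have hnorm := congrArg (√‖·‖) (hE.expectation_star_mul_self_tail huE K x)
  refine ⟨hnorm, hnorm ▸ hE.isLeast_expectationNorm_tail huE (Submodule.span_mono ?_) ?_⟩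
  · rintro _ ⟨g, hg, a, rfl⟩
    exact ⟨g, hg, Ψ a, by rw [hEΨ]⟩
  · refine Submodule.sum_mem _ fun g hg => Submodule.subset_span ?_
    obtain ⟨a, ha⟩ := hE.expectationCoeff_mem_range huE hEΨ hΨ hu hcov hx g
    exact ⟨g, hg, a, by rw [ha]⟩

section RegularRepresentation

variable {H G : Type} [NormedAddCommGroup H] [InnerProductSpace ℂ H]

/-- `π` is the block-diagonal compression of operators on `ℓ²(G,H)`. -/
def IsBlockDiagonalCompression [DecidableEq G]
    (π : (l2 G H →L[ℂ] l2 G H) → (l2 G H →L[ℂ] l2 G H)) : Prop :=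
  ∀ (X : l2 G H →L[ℂ] l2 G H) (ξ η : l2 G H), ⟪π X ξ, η⟫_ℂ =
    ∑' g : G, ⟪X (lp.single 2 g ((ξ : ∀ _ : G, H) g)),
      lp.single 2 g ((η : ∀ _ : G, H) g)⟫_ℂ

namespace IsBlockDiagonalCompression

variable [DecidableEq G] {π : (l2 G H →L[ℂ] l2 G H) → (l2 G H →L[ℂ] l2 G H)}

theorem apply_apply (hπ : IsBlockDiagonalCompression π) (X : l2 G H →L[ℂ] l2 G H)
    (ξ : l2 G H) (g : G) :
    (π X ξ : ∀ _ : G, H) g = (X (lp.single 2 g ((ξ : ∀ _ : G, H) g)) : ∀ _ : G, H) g := by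
  refine ext_inner_right ℂ fun v => ?_
  rw [← lp.inner_single_right, hπ, tsum_eq_single g]
  · rw [lp.single_apply_self, lp.inner_single_right]
  · intro h hh
    rw [lp.single_apply_ne _ _ _ hh, lp.single_zero, inner_zero_right]

theorem apply_single (hπ : IsBlockDiagonalCompression π) (X : l2 G H →L[ℂ] l2 G H)
    (g : G) (v : H) :
    π X (lp.single 2 g v) = lp.single 2 g ((X (lp.single 2 g v) : ∀ _ : G, H) g) := by
  ext h
  rw [hπ.apply_apply]
  obtain rfl | hh := eq_or_ne h g
  · rw [lp.single_apply_self, lp.single_apply_self]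
  · rw [lp.single_apply_ne _ _ _ hh, lp.single_apply_ne _ _ _ hh, lp.single_zero, map_zero]; rfl

theorem map_mul_map (hπ : IsBlockDiagonalCompression π) (X Y : l2 G H →L[ℂ] l2 G H) :
    π (X * π Y) = π X * π Y := by
  ext ξ g
  simp only [mul_apply_eq_comp, hπ.apply_apply, hπ.apply_single]

open scoped ComplexOrder in
theorem map_nonneg (hπ : IsBlockDiagonalCompression π) {X : l2 G H →L[ℂ] l2 G H} (hX : 0 ≤ X) :
    0 ≤ π X := by
  rw [nonneg_iff_isPositive] at hX ⊢
  have hnonneg (ξ : l2 G H) : 0 ≤ ⟪π X ξ, ξ⟫_ℂ := by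
    rw [hπ]
    exact tsum_nonneg fun g => hX.inner_nonneg_left _
  refine (isPositive_iff_complex _).mpr fun ξ => ?_
  exact ⟨(Complex.eq_re_of_ofReal_le (r := 0) (by simpa using hnonneg ξ)).symm,
    (Complex.nonneg_iff.mp (hnonneg ξ)).1⟩

variable [CompleteSpace H]

/-- The block-diagonal compression as a bundled positive map, which makes its continuity
automatic. -/
def toPositiveLinearMap (hπ : IsBlockDiagonalCompression π) :
    (l2 G H →L[ℂ] l2 G H) →ₚ[ℂ] (l2 G H →L[ℂ] l2 G H) :=
  PositiveLinearMap.mk₀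
    { toFun := π
      map_add' := fun X Y => by
        ext ξ g
        simp only [add_apply, hπ.apply_apply, lp.coeFn_add, Pi.add_apply]
      map_smul' := fun c X => by
        ext ξ g
        simp only [smul_apply, hπ.apply_apply, lp.coeFn_smul, Pi.smul_apply,
          RingHom.id_apply] }
    fun _ => hπ.map_nonneg

theorem isAveraging (hπ : IsBlockDiagonalCompression π) :
    IsAveraging hπ.toPositiveLinearMap :=
  hπ.map_mul_map

end IsBlockDiagonalCompression

variable [Group G]

/-- `L` is the left regular representation of `G` on `ℓ²(G,H)`. -/
def IsLeftTranslation (L : G → (l2 G H →L[ℂ] l2 G H)) : Prop :=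
  ∀ (g : G) (ξ : l2 G H) (h : G), (L g ξ : ∀ _ : G, H) h = (ξ : ∀ _ : G, H) (g⁻¹ * h)

namespace IsLeftTranslation

variable {L : G → (l2 G H →L[ℂ] l2 G H)}

theorem map_mul (hL : IsLeftTranslation L) (g h : G) : L (g * h) = L g * L h := by
  ext ξ x
  simp only [mul_apply_eq_comp, hL _ _ _, mul_inv_rev, mul_assoc]

theorem map_one (hL : IsLeftTranslation L) : L 1 = 1 := by
  ext ξ x
  rw [hL, inv_one, one_mul, one_apply_eq_self]

/-- The left regular representation as a monoid homomorphism. -/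
def toMonoidHom (hL : IsLeftTranslation L) : G →* (l2 G H →L[ℂ] l2 G H) where
  toFun := L
  map_one' := hL.map_one
  map_mul' := hL.map_mul

variable [CompleteSpace H]

theorem star_eq_inv (hL : IsLeftTranslation L) (g : G) : star (L g) = L g⁻¹ := by
  rw [star_eq_adjoint, eq_comm, eq_adjoint_iff]
  intro ξ η
  rw [lp.inner_eq_tsum, lp.inner_eq_tsum,
    ← (Equiv.mulLeft g).tsum_eq fun h => ⟪(ξ : ∀ _ : G, H) h, (L g η : ∀ _ : G, H) h⟫_ℂ]
  simp only [hL _ _ _, inv_inv, Equiv.coe_mulLeft, inv_mul_cancel_left]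

end IsLeftTranslation

theorem IsBlockDiagonalCompression.map_leftTranslation_eq_zero [DecidableEq G]
    {π : (l2 G H →L[ℂ] l2 G H) → (l2 G H →L[ℂ] l2 G H)} (hπ : IsBlockDiagonalCompression π)
    {L : G → (l2 G H →L[ℂ] l2 G H)} (hL : IsLeftTranslation L) {g : G} (hg : g ≠ 1) :
    π (L g) = 0 := by
  ext ξ h
  have hne : g⁻¹ * h ≠ h := by rwa [Ne, mul_eq_right, inv_eq_one]
  rw [hπ.apply_apply, hL, lp.single_apply_ne _ _ _ hne]
  rfl

variable [CompleteSpace H]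

/-- `Ψ` is the diagonal representation of the coefficient algebra on `ℓ²(G,H)`, twisted by `α`. -/
def IsTwistedDiagonal {𝒜 : StarSubalgebra ℂ (H →L[ℂ] H)}
    (α : G → (𝒜 ≃⋆ₐ[ℂ] 𝒜)) (Ψ : 𝒜 → (l2 G H →L[ℂ] l2 G H)) : Prop :=
  ∀ (A : 𝒜) (ξ : l2 G H) (g : G),
    (Ψ A ξ : ∀ _ : G, H) g = ((α g⁻¹ A : 𝒜) : H →L[ℂ] H) ((ξ : ∀ _ : G, H) g)

namespace IsTwistedDiagonal

variable {𝒜 : StarSubalgebra ℂ (H →L[ℂ] H)} {α : G → (𝒜 ≃⋆ₐ[ℂ] 𝒜)}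
  {Ψ : 𝒜 → (l2 G H →L[ℂ] l2 G H)}

theorem star_eq (hΨ : IsTwistedDiagonal α Ψ) (A : 𝒜) : Ψ (star A) = star (Ψ A) := by
  rw [star_eq_adjoint, eq_adjoint_iff]
  intro ξ η
  rw [lp.inner_eq_tsum, lp.inner_eq_tsum]
  refine tsum_congr fun g => ?_
  rw [hΨ, hΨ, map_star, StarMemClass.coe_star, star_eq_adjoint, adjoint_inner_left]

/-- The twisted diagonal representation as a star homomorphism. -/
def toStarAlgHom (hΨ : IsTwistedDiagonal α Ψ) : 𝒜 →⋆ₐ[ℂ] (l2 G H →L[ℂ] l2 G H) where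
  toFun := Ψ
  map_one' := by ext ξ g; rw [hΨ, map_one]; rfl
  map_mul' A B := by ext ξ g; rw [hΨ, map_mul, mul_apply_eq_comp, hΨ, hΨ]; rfl
  map_zero' := by ext ξ g; rw [hΨ, map_zero]; rfl
  map_add' A B := by
    ext ξ g
    rw [hΨ, map_add, add_apply, lp.coeFn_add, Pi.add_apply, hΨ, hΨ]; rfl
  commutes' r := by ext ξ g; rw [hΨ, AlgHomClass.commutes]; rfl
  map_star' := hΨ.star_eq

theorem injective (hΨ : IsTwistedDiagonal α Ψ) : Function.Injective Ψ := by
  classical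
  intro A B hAB
  refine EquivLike.injective (α (1 : G)⁻¹) (Subtype.ext (ContinuousLinearMap.ext fun v => ?_))
  simpa only [hΨ _ _ _, lp.single_apply_self] using
    congrArg (fun Z => (Z (lp.single 2 1 v) : ∀ _ : G, H) 1) hAB

theorem isClosed_range (hΨ : IsTwistedDiagonal α Ψ) [IsClosed (𝒜 : Set (H →L[ℂ] H))] :
    IsClosed (Set.range Ψ) :=
  (NonUnitalStarAlgHom.isometry hΨ.toStarAlgHom hΨ.injective).isClosedEmbedding.isClosed_range

theorem covariant {L : G → (l2 G H →L[ℂ] l2 G H)} (hΨ : IsTwistedDiagonal α Ψ)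
    (hL : IsLeftTranslation L) (hα : ∀ g h A, α (g * h) A = α g (α h A)) (g : G) (A : 𝒜) :
    L g * Ψ A * L g⁻¹ = Ψ (α g A) := by
  ext ξ h
  simp only [mul_apply_eq_comp, hL _ _ _, hΨ _ _ _, ← hα,
    mul_inv_rev, inv_inv, mul_inv_cancel_left]

end IsTwistedDiagonal

theorem IsBlockDiagonalCompression.map_twistedDiagonal [DecidableEq G]
    {π : (l2 G H →L[ℂ] l2 G H) → (l2 G H →L[ℂ] l2 G H)} (hπ : IsBlockDiagonalCompression π)
    {𝒜 : StarSubalgebra ℂ (H →L[ℂ] H)} {α : G → (𝒜 ≃⋆ₐ[ℂ] 𝒜)}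
    {Ψ : 𝒜 → (l2 G H →L[ℂ] l2 G H)} (hΨ : IsTwistedDiagonal α Ψ) (A : 𝒜) : π (Ψ A) = Ψ A := by
  ext ξ g
  rw [hπ.apply_apply, hΨ, hΨ, lp.single_apply_self]

end RegularRepresentation

theorem hadamard_stmt4
    {H : Type} [NormedAddCommGroup H] [InnerProductSpace ℂ H] [CompleteSpace H]
    {G : Type} [Group G] [DecidableEq G]
    (𝒜 : StarSubalgebra ℂ (H →L[ℂ] H))
    (h𝒜 : IsClosed (𝒜 : Set (H →L[ℂ] H)))
    (hnd : Dense (↑(Submodule.span ℂ {v : H | ∃ A ∈ 𝒜, ∃ w : H, v = A w}) : Set H))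
    (α : G → (𝒜 ≃⋆ₐ[ℂ] 𝒜))
    (hα1 : ∀ A, α 1 A = A)
    (hαmul : ∀ g h A, α (g * h) A = α g (α h A))
    (Ψ : 𝒜 → (l2 G H →L[ℂ] l2 G H))
    (hΨ : ∀ (A : 𝒜) (ξ : l2 G H) (g : G),
      (Ψ A ξ : ∀ _ : G, H) g = ((α g⁻¹ A : 𝒜) : H →L[ℂ] H) ((ξ : ∀ _ : G, H) g))
    (L : G → (l2 G H →L[ℂ] l2 G H))
    (hL : ∀ (g : G) (ξ : l2 G H) (h : G),
      (L g ξ : ∀ _ : G, H) h = (ξ : ∀ _ : G, H) (g⁻¹ * h))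
    (𝒞 : Set (l2 G H →L[ℂ] l2 G H))
    (h𝒞 : 𝒞 = ((StarAlgebra.adjoin ℂ
        (Set.range Ψ ∪ Set.range L)).topologicalClosure : Set _))
    (π : (l2 G H →L[ℂ] l2 G H) → (l2 G H →L[ℂ] l2 G H))
    (hπ : ∀ (X : l2 G H →L[ℂ] l2 G H) (ξ η : l2 G H), ⟪π X ξ, η⟫_ℂ =
      ∑' g : G, ⟪X (lp.single 2 g ((ξ : ∀ _ : G, H) g)),
        lp.single 2 g ((η : ∀ _ : G, H) g)⟫_ℂ)
    :
    ∀ X ∈ 𝒞, ∀ K : Finset G,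
      Real.sqrt ‖π (star (X - ∑ g ∈ K, L g * π (star (L g) * X))
          * (X - ∑ g ∈ K, L g * π (star (L g) * X)))‖
        = Real.sqrt ‖π (star X * X)
            - ∑ g ∈ K, star (π (star (L g) * X)) * π (star (L g) * X)‖ ∧
      Real.sqrt ‖π (star X * X)
            - ∑ g ∈ K, star (π (star (L g) * X)) * π (star (L g) * X)‖
        = sInf ((fun Y => Real.sqrt ‖π (star (X - Y) * (X - Y))‖) ''
            ((Submodule.span ℂ
              {Z : l2 G H →L[ℂ] l2 G H | ∃ k ∈ K, ∃ A : 𝒜, Z = L k * Ψ A}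
              : Submodule ℂ (l2 G H →L[ℂ] l2 G H)) : Set (l2 G H →L[ℂ] l2 G H))) := by
  subst h𝒞
  intro X hX K
  have hΨdiag : IsTwistedDiagonal α Ψ := hΨ
  have hLtrans : IsLeftTranslation L := hL
  have hπdiag : IsBlockDiagonalCompression π := hπ
  obtain ⟨htail, hleast⟩ := hadamard_stmt4_general
    (Ψ := hΨdiag.toStarAlgHom) (u := hLtrans.toMonoidHom) (E := hπdiag.toPositiveLinearMap)
    hΨdiag.isClosed_range hLtrans.star_eq_inv (hΨdiag.covariant hLtrans hαmul)
    hπdiag.isAveraging (hπdiag.map_twistedDiagonal hΨdiag)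
    (fun _ => hπdiag.map_leftTranslation_eq_zero hLtrans) hX K
  exact ⟨htail, hleast.csInf_eq.symm⟩
end
end

section
/- The reduced crossed product 𝒞 is closed under the Hadamard product: for all X, Y ∈ 𝒞, the operator X ⋆ Y again belongs to 𝒞. -/
/-!
Call an operator on `ℓ²(G, H)` diagonal if it acts coordinate by coordinate. The operators `Ψ A` are
diagonal and conjugation by `L g` preserves diagonality, so the `*`-algebra generated by any set of
diagonal operators and the `L g` is spanned by the products `D * L g` with `D` diagonal in that
algebra. Since `(X ⋆ Y) ξ` has `k`-th coordinate `X (h ↦ Y (δ_h · ξ h) k) k`, one finds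
`(D * L g) ⋆ (E * L h) = D * E * L g` if `g = h`, and `0` otherwise. Hence the `*`-algebra is closed
under `⋆`, and so is its norm closure, because `⋆` is bilinear and norm continuous.
-/

set_option synthInstance.maxHeartbeats 1000000
set_option maxHeartbeats 1000000

open scoped InnerProductSpace
open ContinuousLinearMap

noncomputable section

/-- The Hadamard product `X ⋆ Y := V* ∘ ρ(X) ∘ F ∘ ρ(Y) ∘ V`. -/
def hadamard {H : Type} [NormedAddCommGroup H] [InnerProductSpace ℂ H] [CompleteSpace H]
    {G : Type}
    (ρ : (l2 G H →L[ℂ] l2 G H) → (l2 G (l2 G H) →L[ℂ] l2 G (l2 G H)))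
    (V : l2 G H →L[ℂ] l2 G (l2 G H))
    (F : l2 G (l2 G H) →L[ℂ] l2 G (l2 G H))
    (X Y : l2 G H →L[ℂ] l2 G H) : l2 G H →L[ℂ] l2 G H :=
  adjoint V ∘L (ρ X ∘L (F ∘L (ρ Y ∘L V)))

section Ampliation

variable (𝕜 E F ι : Type*) [RCLike 𝕜] [NormedAddCommGroup E] [NormedSpace 𝕜 E]
  [NormedAddCommGroup F] [NormedSpace 𝕜 F] (p : ENNReal) [Fact (1 ≤ p)]

/-- The ampliation `X ↦ (ξ ↦ (X (ξ i))ᵢ)` of operators `E → F` to operators `ℓᵖ(ι, E) → ℓᵖ(ι, F)`,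
bundled as a continuous linear map; `ρ` is the case `E = F = ℓ²(G, H)`, `ι = G`, `p = 2`. -/
def ampliation :
    (E →L[𝕜] F) →L[𝕜] lp (fun _ : ι => E) p →L[𝕜] lp (fun _ : ι => F) p :=
  have norm_le (X : E →L[𝕜] F) (ξ : lp (fun _ : ι => E) p) (i : ι) :
      ‖X (ξ i)‖ ≤ ‖((‖X‖ : 𝕜) • ξ) i‖ := by
    simpa [norm_smul] using X.le_opNorm (ξ i)
  LinearMap.mkContinuous₂
    (LinearMap.mk₂ 𝕜
      (fun X ξ => (⟨fun i => X (ξ i), (lp.memℓp ((‖X‖ : 𝕜) • ξ)).mono' (norm_le X ξ)⟩ :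
        lp (fun _ : ι => F) p))
      (fun _ _ _ => rfl) (fun _ _ _ => rfl)
      (fun X _ _ => lp.ext (funext fun _ => map_add X _ _))
      (fun c X _ => lp.ext (funext fun _ => map_smul X c _)))
    1 fun X ξ =>
      have p_ne_zero : p ≠ 0 := (zero_lt_one.trans_le Fact.out).ne'
      calc _ ≤ ‖(‖X‖ : 𝕜) • ξ‖ := lp.norm_mono p_ne_zero (norm_le X ξ)
        _ = 1 * ‖X‖ * ‖ξ‖ := by simp [lp.norm_const_smul p_ne_zero]

variable {𝕜 E F ι p}

@[simp]
theorem ampliation_apply (X : E →L[𝕜] F) (ξ : lp (fun _ : ι => E) p) (i : ι) :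
    ampliation 𝕜 E F ι p X ξ i = X (ξ i) :=
  rfl

end Ampliation

section DiagonalOperators

variable {𝕜 ι : Type*} [RCLike 𝕜] {E : ι → Type*} [∀ i, NormedAddCommGroup (E i)]
  [∀ i, InnerProductSpace 𝕜 (E i)] [∀ i, CompleteSpace (E i)]

-- Test against the vectors `δ_i · v`: their images under `D` are supported at `i`.
theorem adjoint_apply_eq_zero_of_local {D : lp E 2 →L[𝕜] lp E 2}
    (hD : ∀ ξ i, ξ i = 0 → D ξ i = 0) {ξ : lp E 2} {i : ι} (hξ : ξ i = 0) :
    adjoint D ξ i = 0 := by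
  classical
  refine ext_inner_left 𝕜 fun v => ?_
  rw [← lp.inner_single_left, adjoint_inner_right, lp.inner_eq_tsum, inner_zero_right]
  refine (tsum_congr fun j => ?_).trans tsum_zero
  rcases eq_or_ne j i with rfl | hne
  · rw [hξ, inner_zero_right]
  · rw [hD _ j (lp.single_apply_ne 2 i v hne), inner_zero_left]

variable (𝕜 E) in
/-- The `*`-algebra of diagonal operators on the Hilbert sum of the spaces `E i`. Diagonality is
encoded as locality: a coordinate of `D ξ` vanishes as soon as the same coordinate of `ξ` does. -/
def diagonalOperators : StarSubalgebra 𝕜 (lp E 2 →L[𝕜] lp E 2) where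
  carrier := {D | ∀ (ξ : lp E 2) (i : ι), ξ i = 0 → D ξ i = 0}
  mul_mem' hD hD' ξ i hξ := hD _ i (hD' ξ i hξ)
  add_mem' hD hD' ξ i hξ := by simp [hD ξ i hξ, hD' ξ i hξ]
  algebraMap_mem' c ξ i hξ := by simp [Algebra.algebraMap_eq_smul_one, hξ]
  star_mem' hD _ _ hξ := adjoint_apply_eq_zero_of_local hD hξ

theorem mem_diagonalOperators {D : lp E 2 →L[𝕜] lp E 2} :
    D ∈ diagonalOperators 𝕜 E ↔ ∀ ξ i, ξ i = 0 → D ξ i = 0 :=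
  Iff.rfl

theorem apply_eq_apply_of_mem_diagonalOperators {D : lp E 2 →L[𝕜] lp E 2}
    (hD : D ∈ diagonalOperators 𝕜 E) {ξ η : lp E 2} {i : ι} (h : ξ i = η i) :
    D ξ i = D η i := by
  simpa [sub_eq_zero] using mem_diagonalOperators.1 hD (ξ - η) i (by simp [h])

end DiagonalOperators

section DiagonalEmbedding

variable {𝕜 ι : Type*} [RCLike 𝕜] [DecidableEq ι] {E : ι → Type*} [∀ i, NormedAddCommGroup (E i)]
  [∀ i, InnerProductSpace 𝕜 (E i)] [∀ i, CompleteSpace (E i)]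

theorem adjoint_diagonalEmbedding_apply {V : lp E 2 →L[𝕜] lp (fun _ : ι => lp E 2) 2}
    (hV : ∀ ξ i, V ξ i = lp.single 2 i (ξ i)) (Ξ : lp (fun _ : ι => lp E 2) 2) (i : ι) :
    adjoint V Ξ i = Ξ i i := by
  refine ext_inner_left 𝕜 fun v => ?_
  have V_single : V (lp.single 2 i v) = lp.single 2 i (lp.single 2 i v) := by
    ext j : 2
    rcases eq_or_ne j i with rfl | hne
    · simp [hV]
    · simp [hV, hne]
  calc ⟪v, adjoint V Ξ i⟫_𝕜
      = ⟪lp.single 2 i v, adjoint V Ξ⟫_𝕜 := (lp.inner_single_left ..).symm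
    _ = ⟪lp.single 2 i (lp.single 2 i v), Ξ⟫_𝕜 := by rw [adjoint_inner_right, V_single]
    _ = ⟪lp.single 2 i v, Ξ i⟫_𝕜 := lp.inner_single_left ..
    _ = ⟪v, Ξ i i⟫_𝕜 := lp.inner_single_left ..

end DiagonalEmbedding

section CrossedMonomials

/-- The monoid of products `d * U g` with `d ∈ 𝒟`, where the representation `U` of `G` normalizes
`𝒟`; it spans the image of the algebraic crossed product of `𝒟` by `G`. -/
def crossedMonomials {B G : Type*} [Monoid B] [Group G] (𝒟 : Submonoid B) (U : G →* B)
    (hU : ∀ g, ∀ d ∈ 𝒟, U g * d * U g⁻¹ ∈ 𝒟) : Submonoid B where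
  carrier := {x | ∃ d ∈ 𝒟, ∃ g, x = d * U g}
  one_mem' := ⟨1, one_mem 𝒟, 1, by simp⟩
  mul_mem' := by
    rintro _ _ ⟨d, hd, g, rfl⟩ ⟨e, he, h, rfl⟩
    have U_inv_mul_cancel : U g⁻¹ * U g = 1 := by rw [← map_mul, inv_mul_cancel, map_one]
    refine ⟨d * (U g * e * U g⁻¹), mul_mem hd (hU g e he), g * h, ?_⟩
    simp only [map_mul, mul_assoc]
    rw [← mul_assoc (U g⁻¹), U_inv_mul_cancel, one_mul]

theorem adjoin_union_range_le_span_crossedMonomials {R B G : Type*} [CommSemiring R]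
    [StarRing R] [Semiring B] [StarRing B] [Algebra R B] [StarModule R B] [Group G]
    {𝒟 : StarSubalgebra R B} {U : G →* B}
    (hU : ∀ g, ∀ d ∈ 𝒟.toSubmonoid, U g * d * U g⁻¹ ∈ 𝒟.toSubmonoid)
    (U_star : ∀ g, star (U g) = U g⁻¹) {S : Set B} (hS : S ⊆ 𝒟) :
    Subalgebra.toSubmodule (StarAlgebra.adjoin R (S ∪ Set.range U)).toSubalgebra ≤
      Submodule.span R (crossedMonomials 𝒟.toSubmonoid U hU) := by
  have left_mem {d : B} (hd : d ∈ 𝒟) : d ∈ crossedMonomials 𝒟.toSubmonoid U hU :=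
    ⟨d, hd, 1, by simp⟩
  have right_mem (g : G) : U g ∈ crossedMonomials 𝒟.toSubmonoid U hU :=
    ⟨1, one_mem 𝒟, g, by simp⟩
  rw [StarAlgebra.adjoin_eq_span]
  refine Submodule.span_mono (Submonoid.closure_le.2 ?_)
  rintro x ((hx | ⟨g, rfl⟩) | (hx | ⟨g, hg⟩))
  · exact left_mem (hS hx)
  · exact right_mem g
  · exact left_mem (star_mem_iff.1 (hS hx))
  · rw [← star_star x, ← hg, U_star]
    exact right_mem g⁻¹

end CrossedMonomials

section LeftTranslations

variable {H : Type} [NormedAddCommGroup H] [InnerProductSpace ℂ H] {G : Type} [Group G]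
  (L : G → l2 G H →L[ℂ] l2 G H)

/-- The left translations `L g` of `ℓ²(G, H)`, bundled as a representation of `G`. -/
def leftTranslation (hL : ∀ g ξ h, L g ξ h = ξ (g⁻¹ * h)) :
    G →* (l2 G H →L[ℂ] l2 G H) where
  toFun := L
  map_one' := by
    ext ξ h
    simp [hL]
  map_mul' g h := by
    ext ξ k
    simp [hL, mul_assoc]

variable {L} [CompleteSpace H]

theorem star_leftTranslation (hL : ∀ g ξ h, L g ξ h = ξ (g⁻¹ * h)) (g : G) :
    star (leftTranslation L hL g) = leftTranslation L hL g⁻¹ := by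
  refine ((eq_adjoint_iff _ _).2 fun ξ η => ?_).symm
  rw [lp.inner_eq_tsum, lp.inner_eq_tsum,
    ← (Equiv.mulLeft g).tsum_eq fun h => ⟪ξ h, leftTranslation L hL g η h⟫_ℂ]
  simp [leftTranslation, hL]

theorem leftTranslation_conj_mem_diagonalOperators (hL : ∀ g ξ h, L g ξ h = ξ (g⁻¹ * h)) (g : G)
    {D : l2 G H →L[ℂ] l2 G H} (hD : D ∈ diagonalOperators ℂ fun _ : G => H) :
    leftTranslation L hL g * D * leftTranslation L hL g⁻¹ ∈ diagonalOperators ℂ fun _ : G => H := by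
  intro ξ k hξ
  have : D (L g⁻¹ ξ) (g⁻¹ * k) = 0 := hD _ _ (by simpa [hL] using hξ)
  simpa [leftTranslation, hL] using this

end LeftTranslations

section Hadamard

variable {H : Type} [NormedAddCommGroup H] [InnerProductSpace ℂ H] {G : Type}
  {ρ : (l2 G H →L[ℂ] l2 G H) → (l2 G (l2 G H) →L[ℂ] l2 G (l2 G H))}
  {V : l2 G H →L[ℂ] l2 G (l2 G H)} {F : l2 G (l2 G H) →L[ℂ] l2 G (l2 G H)}

theorem leftTranslation_swap_apply [Group G] [DecidableEq G]
    {L : G → l2 G H →L[ℂ] l2 G H} (hL : ∀ g ξ h, L g ξ h = ξ (g⁻¹ * h))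
    (hρ : ∀ X Ξ g, ρ X Ξ g = X (Ξ g)) (hV : ∀ ξ g, V ξ g = lp.single 2 g (ξ g))
    (hF : ∀ Ξ g h, F Ξ g h = Ξ h g) (Y : l2 G H →L[ℂ] l2 G H) (ξ : l2 G H) (g k : G) :
    L g (F (ρ Y (V ξ)) k) k = Y (lp.single 2 (g⁻¹ * k) (ξ (g⁻¹ * k))) k := by
  rw [hL, hF, hρ, hV]

variable [CompleteSpace H]

/-- The Hadamard product, bundled as a continuous bilinear map. -/
def hadamardCLM (V : l2 G H →L[ℂ] l2 G (l2 G H)) (F : l2 G (l2 G H) →L[ℂ] l2 G (l2 G H)) :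
    (l2 G H →L[ℂ] l2 G H) →L[ℂ] (l2 G H →L[ℂ] l2 G H) →L[ℂ] l2 G H →L[ℂ] l2 G H :=
  (compL ℂ (l2 G H) (l2 G (l2 G H)) (l2 G H)).bilinearComp
    (postcomp _ (adjoint V) ∘L ampliation ℂ _ _ G 2)
    (postcomp _ F ∘L precomp _ V ∘L ampliation ℂ _ _ G 2)

theorem hadamard_eq_hadamardCLM (hρ : ∀ X Ξ g, ρ X Ξ g = X (Ξ g)) (X Y : l2 G H →L[ℂ] l2 G H) :
    hadamard ρ V F X Y = hadamardCLM V F X Y := by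
  have ρ_eq : ρ = ampliation ℂ (l2 G H) (l2 G H) G 2 := by
    ext X Ξ : 2
    exact lp.ext (funext fun g => hρ X Ξ g)
  rw [ρ_eq]
  rfl

variable [DecidableEq G]

theorem hadamard_apply (hρ : ∀ X Ξ g, ρ X Ξ g = X (Ξ g))
    (hV : ∀ ξ g, V ξ g = lp.single 2 g (ξ g)) (X Y : l2 G H →L[ℂ] l2 G H) (ξ : l2 G H) (g : G) :
    hadamard ρ V F X Y ξ g = X (F (ρ Y (V ξ)) g) g := by
  simp only [hadamard, comp_apply, adjoint_diagonalEmbedding_apply hV, hρ]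

variable [Group G] {L : G → l2 G H →L[ℂ] l2 G H}

theorem hadamard_mul_leftTranslation_self
    (hL : ∀ g ξ h, L g ξ h = ξ (g⁻¹ * h)) (hρ : ∀ X Ξ g, ρ X Ξ g = X (Ξ g))
    (hV : ∀ ξ g, V ξ g = lp.single 2 g (ξ g)) (hF : ∀ Ξ g h, F Ξ g h = Ξ h g)
    {D E : l2 G H →L[ℂ] l2 G H}
    (hD : D ∈ diagonalOperators ℂ fun _ : G => H) (hE : E ∈ diagonalOperators ℂ fun _ : G => H)
    (g : G) : hadamard ρ V F (D * L g) (E * L g) = D * E * L g := by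
  ext ξ k
  rw [hadamard_apply hρ hV]
  refine apply_eq_apply_of_mem_diagonalOperators hD ?_
  exact (leftTranslation_swap_apply hL hρ hV hF ..).trans
    (apply_eq_apply_of_mem_diagonalOperators hE (by simp [hL]))

theorem hadamard_mul_leftTranslation_of_ne
    (hL : ∀ g ξ h, L g ξ h = ξ (g⁻¹ * h)) (hρ : ∀ X Ξ g, ρ X Ξ g = X (Ξ g))
    (hV : ∀ ξ g, V ξ g = lp.single 2 g (ξ g)) (hF : ∀ Ξ g h, F Ξ g h = Ξ h g)
    {D E : l2 G H →L[ℂ] l2 G H}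
    (hD : D ∈ diagonalOperators ℂ fun _ : G => H) (hE : E ∈ diagonalOperators ℂ fun _ : G => H)
    {g h : G} (hgh : g ≠ h) : hadamard ρ V F (D * L g) (E * L h) = 0 := by
  ext ξ k
  rw [hadamard_apply hρ hV]
  refine hD _ k ?_
  exact (leftTranslation_swap_apply hL hρ hV hF ..).trans (hE _ k (by simp [hL, hgh.symm]))

theorem hadamard_mem_adjoin
    (hL : ∀ g ξ h, L g ξ h = ξ (g⁻¹ * h)) (hρ : ∀ X Ξ g, ρ X Ξ g = X (Ξ g))
    (hV : ∀ ξ g, V ξ g = lp.single 2 g (ξ g)) (hF : ∀ Ξ g h, F Ξ g h = Ξ h g)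
    {S : Set (l2 G H →L[ℂ] l2 G H)}
    (hS : S ⊆ diagonalOperators ℂ fun _ : G => H) {X Y : l2 G H →L[ℂ] l2 G H}
    (hX : X ∈ StarAlgebra.adjoin ℂ (S ∪ Set.range L))
    (hY : Y ∈ StarAlgebra.adjoin ℂ (S ∪ Set.range L)) :
    hadamard ρ V F X Y ∈ StarAlgebra.adjoin ℂ (S ∪ Set.range L) := by
  set C := StarAlgebra.adjoin ℂ (S ∪ Set.range L)
  let 𝒟 := C ⊓ diagonalOperators ℂ fun _ : G => H
  let U := leftTranslation L hL
  have L_mem (g : G) : L g ∈ C := StarAlgebra.subset_adjoin ℂ _ (.inr ⟨g, rfl⟩)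
  have S_subset : S ⊆ 𝒟 := fun D hD => ⟨StarAlgebra.subset_adjoin ℂ _ (.inl hD), hS hD⟩
  have conj_mem (g : G) (D) (hD : D ∈ 𝒟.toSubmonoid) : U g * D * U g⁻¹ ∈ 𝒟.toSubmonoid :=
    ⟨mul_mem (mul_mem (L_mem g) hD.1) (L_mem g⁻¹),
      leftTranslation_conj_mem_diagonalOperators hL g hD.2⟩
  have C_le_span := adjoin_union_range_le_span_crossedMonomials conj_mem
    (star_leftTranslation hL) S_subset
  rw [hadamard_eq_hadamardCLM hρ]
  refine LinearMap.BilinMap.apply_apply_mem_of_mem_span (Subalgebra.toSubmodule C.toSubalgebra)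
    _ _ (hadamardCLM V F).toLinearMap₁₂ ?_ X Y (C_le_span hX) (C_le_span hY)
  rintro _ ⟨D, hD, g, rfl⟩ _ ⟨E, hE, h, rfl⟩
  suffices hadamard ρ V F (D * L g) (E * L h) ∈ C by rwa [hadamard_eq_hadamardCLM hρ] at this
  rcases eq_or_ne g h with rfl | hgh
  · rw [hadamard_mul_leftTranslation_self hL hρ hV hF hD.2 hE.2]
    exact mul_mem (mul_mem hD.1 hE.1) (L_mem g)
  · rw [hadamard_mul_leftTranslation_of_ne hL hρ hV hF hD.2 hE.2 hgh]
    exact zero_mem C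

end Hadamard

theorem hadamard_stmt12_general {H : Type} [NormedAddCommGroup H] [InnerProductSpace ℂ H]
    [CompleteSpace H] {G : Type} [Group G] [DecidableEq G]
    {S : Set (l2 G H →L[ℂ] l2 G H)} (hS : S ⊆ diagonalOperators ℂ fun _ : G => H)
    {L : G → l2 G H →L[ℂ] l2 G H} (hL : ∀ g ξ h, L g ξ h = ξ (g⁻¹ * h))
    {ρ : (l2 G H →L[ℂ] l2 G H) → (l2 G (l2 G H) →L[ℂ] l2 G (l2 G H))}
    (hρ : ∀ X Ξ g, ρ X Ξ g = X (Ξ g))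
    {V : l2 G H →L[ℂ] l2 G (l2 G H)} (hV : ∀ ξ g, V ξ g = lp.single 2 g (ξ g))
    {F : l2 G (l2 G H) →L[ℂ] l2 G (l2 G H)} (hF : ∀ Ξ g h, F Ξ g h = Ξ h g)
    {X Y : l2 G H →L[ℂ] l2 G H}
    (hX : X ∈ (StarAlgebra.adjoin ℂ (S ∪ Set.range L)).topologicalClosure)
    (hY : Y ∈ (StarAlgebra.adjoin ℂ (S ∪ Set.range L)).topologicalClosure) :
    hadamard ρ V F X Y ∈ (StarAlgebra.adjoin ℂ (S ∪ Set.range L)).topologicalClosure := by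
  rw [hadamard_eq_hadamardCLM hρ]
  refine map_mem_closure₂ (f := fun X Y => hadamardCLM V F X Y) (hadamardCLM V F).continuous₂ hX hY
    fun X hX Y hY => ?_
  rw [← hadamard_eq_hadamardCLM hρ]
  exact hadamard_mem_adjoin hL hρ hV hF hS hX hY

theorem hadamard_stmt12
    {H : Type} [NormedAddCommGroup H] [InnerProductSpace ℂ H] [CompleteSpace H]
    {G : Type} [Group G] [DecidableEq G]
    (𝒜 : StarSubalgebra ℂ (H →L[ℂ] H))
    (h𝒜 : IsClosed (𝒜 : Set (H →L[ℂ] H)))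
    (hnd : Dense (↑(Submodule.span ℂ {v : H | ∃ A ∈ 𝒜, ∃ w : H, v = A w}) : Set H))
    (α : G → (𝒜 ≃⋆ₐ[ℂ] 𝒜))
    (hα1 : ∀ A, α 1 A = A)
    (hαmul : ∀ g h A, α (g * h) A = α g (α h A))
    (Ψ : 𝒜 → (l2 G H →L[ℂ] l2 G H))
    (hΨ : ∀ (A : 𝒜) (ξ : l2 G H) (g : G),
      (Ψ A ξ : ∀ _ : G, H) g = ((α g⁻¹ A : 𝒜) : H →L[ℂ] H) ((ξ : ∀ _ : G, H) g))
    (L : G → (l2 G H →L[ℂ] l2 G H))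
    (hL : ∀ (g : G) (ξ : l2 G H) (h : G),
      (L g ξ : ∀ _ : G, H) h = (ξ : ∀ _ : G, H) (g⁻¹ * h))
    (𝒞 : Set (l2 G H →L[ℂ] l2 G H))
    (h𝒞 : 𝒞 = ((StarAlgebra.adjoin ℂ
        (Set.range Ψ ∪ Set.range L)).topologicalClosure : Set _))
    (ρ : (l2 G H →L[ℂ] l2 G H) → (l2 G (l2 G H) →L[ℂ] l2 G (l2 G H)))
    (hρ : ∀ (X : l2 G H →L[ℂ] l2 G H) (Ξ : l2 G (l2 G H)) (g : G),
      (ρ X Ξ : ∀ _ : G, l2 G H) g = X ((Ξ : ∀ _ : G, l2 G H) g))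
    (V : l2 G H →L[ℂ] l2 G (l2 G H))
    (hV : ∀ (ξ : l2 G H) (g : G),
      (V ξ : ∀ _ : G, l2 G H) g = lp.single 2 g ((ξ : ∀ _ : G, H) g))
    (F : l2 G (l2 G H) →L[ℂ] l2 G (l2 G H))
    (hF : ∀ (Ξ : l2 G (l2 G H)) (g h : G),
      ((F Ξ : ∀ _ : G, l2 G H) g : ∀ _ : G, H) h
        = ((Ξ : ∀ _ : G, l2 G H) h : ∀ _ : G, H) g)
    :
    ∀ X ∈ 𝒞, ∀ Y ∈ 𝒞, hadamard ρ V F X Y ∈ 𝒞 := by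
  subst h𝒞
  exact fun X hX Y hY => hadamard_stmt12_general
    (by rintro _ ⟨A, rfl⟩ ξ g hξ; rw [hΨ, hξ, map_zero]) hL hρ hV hF hX hY
end
end
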